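/- Let P₁(θ) = A cos θ + B sin θ with A² + B² ≠ 0, P̄₁(θ) = A sin θ − B cos θ, and λ = (A² + B²)/2. For each integer k ≥ 0 and each j with 0 ≤ j ≤ k, write A_{2k+1}^{2j+1} = (1/π)∫₀^{2π} P̄₁(θ)^{2k} P₁(θ) cos((2j+1)θ) dθ and B_{2k+1}^{2j+1} = (1/π)∫₀^{2π} P̄₁(θ)^{2k} P₁(θ) sin((2j+1)θ) dθ for the Fourier coefficients of P̄₁^{2k} P₁. Then for each k ≥ 1 and each j with 0 ≤ j ≤ k−1 there exists a real constant μ_{2k+1}^{2j+1}, depending only on k, j and λ, such that A_{2k+1}^{2j+1} = μ_{2k+1}^{2j+1} · A_{2j+1}^{2j+1} and B_{2k+1}^{2j+1} = μ_{2k+1}^{2j+1} · B_{2j+1}^{2j+1}; moreover these constants satisfy the recursion μ_{2k+1}^{2j+1} = ((2k−1)/2)·( (2/(2j−1)) μ_{2k−1}^{2j−1} − (λ²/(2(2j+3))) μ_{2k−1}^{2j+3} ), with μ₃¹ = λ/2, μ_{2k−1}^{−1} = −μ_{2k−1}^{1} μ₃¹, μ_j^j = 1, and μ_i^j = 0 for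 j > i. -/

import Mathlib

open Real

lemma fcp_exp_int (m : ℤ) :
    ∫ θ in (0 : ℝ)..(2 * Real.pi), Complex.exp ((m : ℂ) * Complex.I * (θ : ℂ))
      = if m = 0 then 2 * (Real.pi : ℂ) else 0 := by
  split_ifs with h
  · subst h; simp
  · have hc : (m : ℂ) * Complex.I ≠ 0 := mul_ne_zero (by exact_mod_cast h) Complex.I_ne_zero
    rw [integral_exp_mul_complex hc]
    have h1 : Complex.exp ((m : ℂ) * Complex.I * ((2 * Real.pi : ℝ) : ℂ)) = 1 := by
      rw [Complex.exp_eq_one_iff]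
      exact ⟨m, by push_cast; ring⟩
    rw [h1]; simp

lemma fcp_pow_int (α β : ℂ) (n : ℕ) (q : ℤ) :
    ∫ θ in (0 : ℝ)..(2 * Real.pi),
      (α * Complex.exp (Complex.I * (θ : ℂ)) + β * Complex.exp (-(Complex.I * (θ : ℂ)))) ^ n
        * Complex.exp ((q : ℂ) * Complex.I * (θ : ℂ))
      = ∑ a ∈ Finset.range (n + 1), α ^ a * β ^ (n - a) * (n.choose a : ℂ) *
          (if (2 * a - n + q : ℤ) = 0 then 2 * (Real.pi : ℂ) else 0) := by
  have h1 : ∀ θ : ℝ,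
      (α * Complex.exp (Complex.I * (θ : ℂ)) + β * Complex.exp (-(Complex.I * (θ : ℂ)))) ^ n
        * Complex.exp ((q : ℂ) * Complex.I * (θ : ℂ))
      = ∑ a ∈ Finset.range (n + 1), α ^ a * β ^ (n - a) * (n.choose a : ℂ) *
          Complex.exp (((2 * a - n + q : ℤ) : ℂ) * Complex.I * (θ : ℂ)) := by
    intro θ
    rw [add_pow, Finset.sum_mul]
    refine Finset.sum_congr rfl fun a ha => ?_
    have ha' : a ≤ n := by simpa [Nat.lt_succ_iff] using ha
    have : Complex.exp (((2 * a - n + q : ℤ) : ℂ) * Complex.I * (θ : ℂ))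
      = Complex.exp (Complex.I * (θ : ℂ)) ^ a * Complex.exp (-(Complex.I * (θ : ℂ))) ^ (n - a)
        * Complex.exp ((q : ℂ) * Complex.I * (θ : ℂ)) := by
      rw [← Complex.exp_nat_mul, ← Complex.exp_nat_mul, ← Complex.exp_add, ← Complex.exp_add]
      congr 1
      push_cast [Nat.cast_sub ha']
      ring
    rw [this, mul_pow, mul_pow]; ring
  simp_rw [h1]
  rw [intervalIntegral.integral_finsetSum]
  · refine Finset.sum_congr rfl fun a _ => ?_
    rw [intervalIntegral.integral_const_mul, fcp_exp_int]
  · intro a _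
    apply Continuous.intervalIntegrable
    fun_prop

lemma fcp_pow_int_val (α β : ℂ) (j m : ℕ) :
    ∫ θ in (0 : ℝ)..(2 * Real.pi),
      (α * Complex.exp (Complex.I * (θ : ℂ)) + β * Complex.exp (-(Complex.I * (θ : ℂ)))) ^ (2 * (j + m))
        * Complex.exp (((2 * j : ℤ) : ℂ) * Complex.I * (θ : ℂ))
      = α ^ m * β ^ (m + 2 * j) * ((2 * (j + m)).choose m : ℂ) * (2 * (Real.pi : ℂ)) := by
  rw [fcp_pow_int, Finset.sum_eq_single m]
  · rw [if_pos (by push_cast; ring)]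
    congr 4; omega
  · intro b _ hb
    rw [if_neg (by push_cast; omega), mul_zero]
  · intro h; exact absurd (Finset.mem_range.2 (by omega)) h

lemma fcp_pow_int_zero (α β : ℂ) (j : ℕ) :
    ∫ θ in (0 : ℝ)..(2 * Real.pi),
      (α * Complex.exp (Complex.I * (θ : ℂ)) + β * Complex.exp (-(Complex.I * (θ : ℂ)))) ^ (2 * j)
        * Complex.exp (((2 * (j + 1 : ℕ) : ℤ) : ℂ) * Complex.I * (θ : ℂ)) = 0 := by
  rw [fcp_pow_int]
  refine Finset.sum_eq_zero fun a _ => ?_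
  rw [if_neg (by push_cast; omega), mul_zero]

/-- the full integral, split into the two elementary ones -/
lemma fcp_split (α β : ℂ) (k j : ℕ) :
    ∫ θ in (0 : ℝ)..(2 * Real.pi),
      (α * Complex.exp (Complex.I * (θ : ℂ)) + β * Complex.exp (-(Complex.I * (θ : ℂ)))) ^ (2 * k)
        * (Complex.I * α * Complex.exp (Complex.I * (θ : ℂ))
            - Complex.I * β * Complex.exp (-(Complex.I * (θ : ℂ))))
        * Complex.exp ((2 * (j : ℂ) + 1) * Complex.I * (θ : ℂ))
      = Complex.I * α * (∫ θ in (0 : ℝ)..(2 * Real.pi),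
      (α * Complex.exp (Complex.I * (θ : ℂ)) + β * Complex.exp (-(Complex.I * (θ : ℂ)))) ^ (2 * k)
        * Complex.exp (((2 * (j + 1 : ℕ) : ℤ) : ℂ) * Complex.I * (θ : ℂ)))
       - Complex.I * β * (∫ θ in (0 : ℝ)..(2 * Real.pi),
      (α * Complex.exp (Complex.I * (θ : ℂ)) + β * Complex.exp (-(Complex.I * (θ : ℂ)))) ^ (2 * k)
        * Complex.exp (((2 * j : ℤ) : ℂ) * Complex.I * (θ : ℂ))) := by
  rw [← intervalIntegral.integral_const_mul, ← intervalIntegral.integral_const_mul,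
    ← intervalIntegral.integral_sub]
  · refine intervalIntegral.integral_congr fun θ _ => ?_
    have e1 : Complex.exp (((2 * (j + 1 : ℕ) : ℤ) : ℂ) * Complex.I * (θ : ℂ)) =
        Complex.exp (Complex.I * (θ : ℂ)) * Complex.exp ((2 * (j : ℂ) + 1) * Complex.I * (θ : ℂ)) := by
      rw [← Complex.exp_add]; congr 1; push_cast; ring
    have e2 : Complex.exp (((2 * j : ℤ) : ℂ) * Complex.I * (θ : ℂ)) =
        Complex.exp (-(Complex.I * (θ : ℂ))) * Complex.exp ((2 * (j : ℂ) + 1) * Complex.I * (θ : ℂ)) := by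
      rw [← Complex.exp_add]; congr 1; push_cast; ring
    simp only [e1, e2]
    ring
  · apply Continuous.intervalIntegrable; fun_prop
  · apply Continuous.intervalIntegrable; fun_prop

lemma fcp_ratio (α β : ℂ) (j t : ℕ) (F : ℕ → ℂ)
    (hF : ∀ k, F k = ∫ θ in (0 : ℝ)..(2 * Real.pi),
      (α * Complex.exp (Complex.I * (θ : ℂ)) + β * Complex.exp (-(Complex.I * (θ : ℂ)))) ^ (2 * k)
        * (Complex.I * α * Complex.exp (Complex.I * (θ : ℂ))
            - Complex.I * β * Complex.exp (-(Complex.I * (θ : ℂ))))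
        * Complex.exp ((2 * (j : ℂ) + 1) * Complex.I * (θ : ℂ))) :
    F (j + (t + 1)) = (α * β) ^ (t + 1) * (((2 * (j + (t + 1))).choose (t + 1) : ℂ)
      - ((2 * (j + (t + 1))).choose t : ℂ)) * F j := by
  have h0 := fcp_pow_int_val α β j 0
  have h1 := fcp_pow_int_val α β j (t + 1)
  have h2 := fcp_pow_int_val α β (j + 1) t
  rw [show j + 1 + t = j + (t + 1) by ring] at h2
  simp only [add_zero] at h0
  rw [hF, hF, fcp_split, fcp_split, fcp_pow_int_zero, h0, h1, h2]
  simp only [Nat.choose_zero_right]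
  push_cast
  ring

lemma fcp_complex (f : ℝ → ℝ) (hf : Continuous f) (j : ℕ) :
    ∫ θ in (0 : ℝ)..(2 * Real.pi), (f θ : ℂ) * Complex.exp ((2 * (j : ℂ) + 1) * Complex.I * (θ : ℂ))
     = ((∫ θ in (0 : ℝ)..(2 * Real.pi), f θ * Real.cos ((2 * (j : ℝ) + 1) * θ) : ℝ) : ℂ)
      + ((∫ θ in (0 : ℝ)..(2 * Real.pi), f θ * Real.sin ((2 * (j : ℝ) + 1) * θ) : ℝ) : ℂ)
        * Complex.I := by
  rw [← intervalIntegral.integral_ofReal, ← intervalIntegral.integral_ofReal,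
    ← intervalIntegral.integral_mul_const, ← intervalIntegral.integral_add]
  · refine intervalIntegral.integral_congr fun θ _ => ?_
    rw [show (2 * (j : ℂ) + 1) * Complex.I * (θ : ℂ) = (((2 * (j : ℝ) + 1) * θ : ℝ) : ℂ) * Complex.I by
      push_cast; ring, Complex.exp_mul_I]
    push_cast
    ring
  · apply Continuous.intervalIntegrable; fun_prop
  · apply Continuous.intervalIntegrable; fun_prop

lemma fcp_real (A B : ℝ) (j t : ℕ) (C S : ℕ → ℝ)
    (hC : ∀ k : ℕ, C k = ∫ θ in (0 : ℝ)..(2 * Real.pi),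
      (A * Real.sin θ - B * Real.cos θ) ^ (2 * k) * (A * Real.cos θ + B * Real.sin θ)
        * Real.cos ((2 * (j : ℝ) + 1) * θ))
    (hS : ∀ k : ℕ, S k = ∫ θ in (0 : ℝ)..(2 * Real.pi),
      (A * Real.sin θ - B * Real.cos θ) ^ (2 * k) * (A * Real.cos θ + B * Real.sin θ)
        * Real.sin ((2 * (j : ℝ) + 1) * θ)) :
    C (j + (t + 1)) = ((A ^ 2 + B ^ 2) / 4) ^ (t + 1) * (((2 * (j + (t + 1))).choose (t + 1) : ℝ)
      - ((2 * (j + (t + 1))).choose t : ℝ)) * C j ∧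
    S (j + (t + 1)) = ((A ^ 2 + B ^ 2) / 4) ^ (t + 1) * (((2 * (j + (t + 1))).choose (t + 1) : ℝ)
      - ((2 * (j + (t + 1))).choose t : ℝ)) * S j := by
  set α : ℂ := -((B : ℂ) + A * Complex.I) / 2 with hα
  set β : ℂ := -((B : ℂ) - A * Complex.I) / 2 with hβ
  have key := fcp_ratio α β j t (fun k => (C k : ℂ) + (S k : ℂ) * Complex.I) (by
    intro k
    rw [hC, hS, ← fcp_complex _ (by fun_prop)]
    refine intervalIntegral.integral_congr fun θ _ => ?_
    rw [show -(Complex.I * (θ : ℂ)) = (-(θ : ℂ)) * Complex.I by ring, mul_comm Complex.I (θ : ℂ),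
      Complex.exp_mul_I, Complex.exp_mul_I, Complex.cos_neg, Complex.sin_neg]
    congr 1
    push_cast
    have hI := Complex.I_sq
    congr 1
    · congr 1
      rw [hα, hβ]
      linear_combination (A * Complex.sin θ) * hI
    · rw [hα, hβ]
      linear_combination (A * Complex.cos θ + B * Complex.sin θ) * hI)
  have hαβ : α * β = (((A ^ 2 + B ^ 2) / 4 : ℝ) : ℂ) := by
    rw [hα, hβ]; push_cast; linear_combination (-(A:ℂ) ^ 2 / 4) * Complex.I_sq
  rw [hαβ] at key
  set r : ℝ := ((A ^ 2 + B ^ 2) / 4) ^ (t + 1) * (((2 * (j + (t + 1))).choose (t + 1) : ℝ)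
      - ((2 * (j + (t + 1))).choose t : ℝ)) with hr
  have key2 : (C (j + (t + 1)) : ℂ) + (S (j + (t + 1)) : ℂ) * Complex.I
      = (r : ℂ) * ((C j : ℂ) + (S j : ℂ) * Complex.I) := by
    rw [hr]; push_cast at key ⊢; exact key
  constructor
  · simpa using congrArg Complex.re key2
  · simpa using congrArg Complex.im key2

lemma fcp_choose (j t : ℕ) :
    ((2 * (j + (t + 1))).choose (t + 1) : ℝ) - ((2 * (j + (t + 1))).choose t : ℝ)
      = (2 * (j : ℝ) + 1) / (2 * ((j + (t + 1) : ℕ) : ℝ) + 1) *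
        ((2 * (j + (t + 1)) + 1).choose (t + 1) : ℝ) := by
  have h1 := Nat.add_one_mul_choose_eq (2 * (j + (t + 1))) t
  have h2 := Nat.choose_succ_succ (2 * (j + (t + 1))) t
  have h1' : ((2 * (j + (t + 1)) : ℕ) + 1 : ℝ) * ((2 * (j + (t + 1))).choose t : ℝ) =
    ((2 * (j + (t + 1)) + 1).choose (t + 1) : ℝ) * (t + 1) := by exact_mod_cast h1
  have h2' : ((2 * (j + (t + 1)) + 1).choose (t + 1) : ℝ) = ((2 * (j + (t + 1))).choose t : ℝ)
    + ((2 * (j + (t + 1))).choose (t + 1) : ℝ) := by exact_mod_cast h2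
  push_cast at h1' ⊢
  have hp : (2 * ((j : ℝ) + (t + 1)) + 1) ≠ 0 := by positivity
  field_simp
  linear_combination (-2) * h1' - (2 * ((j : ℝ) + (t + 1)) + 1) * h2'

/-- `C(2k+1, t+2)` version of the Pascal step used by the recursion. -/
lemma fcp_pascal (n t : ℕ) :
    (((n + 1).choose (t + 2) : ℝ)) - ((n + 1).choose (t + 1) : ℝ)
      = (n.choose (t + 2) : ℝ) - (n.choose t : ℝ) := by
  rw [Nat.choose_succ_succ n (t + 1), Nat.choose_succ_succ n t]
  push_cast; ring

noncomputable def fcpMu (lam : ℝ) (i j : ℤ) : ℝ :=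
  if i < j then 0 else if i = j then 1 else
    (lam / 2) ^ ((i - j) / 2).toNat * ((j : ℝ) / (i : ℝ)) *
      (i.toNat.choose ((i - j) / 2).toNat : ℝ)

/-- value at `i = n`, `j = i - 2 m` for positive `n` -/
lemma fcpMu_val (lam : ℝ) (i j : ℤ) (n m : ℕ) (hi : i = n) (hn : 0 < n) (hj : j = n - 2 * m) :
    fcpMu lam i j = (lam / 2) ^ m * ((j : ℝ) / (n : ℝ)) * (n.choose m : ℝ) := by
  unfold fcpMu
  rw [if_neg (by omega)]
  have h2 : ((i - j) / 2).toNat = m := by omega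
  have h3 : i.toNat = n := by omega
  split_ifs with h
  · have : m = 0 := by omega
    subst this
    have : (j : ℝ) = n := by rw [hj]; simp
    have hn' : (n : ℝ) ≠ 0 := by positivity
    rw [this]; simp [hn']
  · rw [h2, h3, hi]; simp

/-- Lemma 3.3: writing `P̄₁^{2k} P₁ = ∑_{j=0}^{k} (A_{2k+1}^{2j+1} cos(2j+1)θ +
B_{2k+1}^{2j+1} sin(2j+1)θ)`, there are constants `μ_{2k+1}^{2j+1}` with
`A_{2k+1}^{2j+1} = μ_{2k+1}^{2j+1} A_{2j+1}^{2j+1}`,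
`B_{2k+1}^{2j+1} = μ_{2k+1}^{2j+1} B_{2j+1}^{2j+1}`, satisfying the recursion
`μ_{2k+1}^{2j+1} = ((2k−1)/2)((2/(2j−1)) μ_{2k−1}^{2j−1} − (λ²/(2(2j+3))) μ_{2k−1}^{2j+3})`
with `μ₃¹ = λ/2`, `μ_{2k−1}^{−1} = −μ_{2k−1}^{1} μ₃¹`, `μ_j^j = 1`, `μ_i^j = 0` for `j > i`. -/
theorem fourier_coeff_proportionality
    (A B : ℝ) (hAB : A ^ 2 + B ^ 2 ≠ 0)
    (P1 Pb : ℝ → ℝ) (lam : ℝ)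
    (hP1 : ∀ θ, P1 θ = A * Real.cos θ + B * Real.sin θ)
    (hPb : ∀ θ, Pb θ = A * Real.sin θ - B * Real.cos θ)
    (hlam : lam = (A ^ 2 + B ^ 2) / 2)
    (Aco Bco : ℕ → ℕ → ℝ)
    (hAco : ∀ k j : ℕ, Aco k j = (1 / Real.pi) *
      ∫ θ in (0 : ℝ)..(2 * Real.pi), Pb θ ^ (2 * k) * P1 θ * Real.cos ((2 * (j : ℝ) + 1) * θ))
    (hBco : ∀ k j : ℕ, Bco k j = (1 / Real.pi) *
      ∫ θ in (0 : ℝ)..(2 * Real.pi), Pb θ ^ (2 * k) * P1 θ * Real.sin ((2 * (j : ℝ) + 1) * θ)) :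
    ∃ μ : ℤ → ℤ → ℝ,
      μ 3 1 = lam / 2 ∧
      (∀ i j : ℤ, i < j → μ i j = 0) ∧
      (∀ j : ℤ, μ j j = 1) ∧
      (∀ k : ℕ, 1 ≤ k → μ (2 * (k : ℤ) - 1) (-1) = -(μ (2 * (k : ℤ) - 1) 1 * μ 3 1)) ∧
      (∀ k j : ℕ, 1 ≤ k → j ≤ k - 1 →
        Aco k j = μ (2 * (k : ℤ) + 1) (2 * (j : ℤ) + 1) * Aco j j ∧
        Bco k j = μ (2 * (k : ℤ) + 1) (2 * (j : ℤ) + 1) * Bco j j ∧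
        μ (2 * (k : ℤ) + 1) (2 * (j : ℤ) + 1) =
          ((2 * (k : ℝ) - 1) / 2) *
            ((2 / (2 * (j : ℝ) - 1)) * μ (2 * (k : ℤ) - 1) (2 * (j : ℤ) - 1) -
              (lam ^ 2 / (2 * (2 * (j : ℝ) + 3))) * μ (2 * (k : ℤ) - 1) (2 * (j : ℤ) + 3))) := by
  refine ⟨fcpMu lam, ?_, ?_, ?_, ?_, ?_⟩
  · rw [fcpMu_val lam 3 1 3 1 (by norm_num) (by norm_num) (by norm_num)]
    norm_num
    ring
  · intro i j h; simp [fcpMu, h]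
  · intro j; simp [fcpMu]
  · intro k hk
    obtain ⟨m, rfl⟩ : ∃ m, k = m + 1 := ⟨k - 1, by omega⟩
    rw [fcpMu_val lam 3 1 3 1 (by norm_num) (by norm_num) (by norm_num),
      fcpMu_val lam _ (-1) (2 * m + 1) (m + 1) (by push_cast; ring) (by omega) (by push_cast; ring),
      fcpMu_val lam _ 1 (2 * m + 1) m (by push_cast; ring) (by omega) (by push_cast; ring),
      Nat.choose_symm_half]
    norm_num
    ring
  · intro k j hk hj
    obtain ⟨t, rfl⟩ : ∃ t, k = j + (t + 1) := ⟨k - 1 - j, by omega⟩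
    have hmu := fcpMu_val lam (2 * ((j + (t + 1) : ℕ) : ℤ) + 1) (2 * (j : ℤ) + 1)
      (2 * (j + (t + 1)) + 1) (t + 1) (by push_cast; ring) (by omega) (by push_cast; ring)
    have hch := fcp_choose j t
    have hmu2 : fcpMu lam (2 * ((j + (t + 1) : ℕ) : ℤ) + 1) (2 * (j : ℤ) + 1) =
        (lam / 2) ^ (t + 1) * (((2 * (j + (t + 1))).choose (t + 1) : ℝ)
          - ((2 * (j + (t + 1))).choose t : ℝ)) := by
      rw [hmu, hch]; push_cast; ring
    have hreal := fcp_real A B j t _ _ (fun _ => rfl) (fun _ => rfl)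
    have hl : (A ^ 2 + B ^ 2) / 4 = lam / 2 := by rw [hlam]; ring
    rw [hl, ← hmu2] at hreal
    refine ⟨?_, ?_, ?_⟩
    · rw [hAco, hAco]
      simp only [hP1, hPb]
      rw [hreal.1]; ring
    · rw [hBco, hBco]
      simp only [hP1, hPb]
      rw [hreal.2]; ring
    · rw [hmu2, fcpMu_val lam _ (2 * (j : ℤ) - 1) (2 * (j + t) + 1) (t + 1)
        (by push_cast; ring) (by omega) (by push_cast; ring)]
      have hj1 : (2 * (j : ℝ) - 1) ≠ 0 := by
        intro h
        have h' : (2 * (j : ℤ) - 1) = 0 := by exact_mod_cast h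
        omega
      have hj3 : (2 * (j : ℝ) + 3) ≠ 0 := by positivity
      have hn : (2 * ((j : ℝ) + t) + 1) ≠ 0 := by positivity
      rcases t with _ | s
      · have h0 : fcpMu lam (2 * ((j + (0 + 1) : ℕ) : ℤ) - 1) (2 * (j : ℤ) + 3) = 0 := by
          unfold fcpMu; rw [if_pos (by push_cast; omega)]
        rw [h0]
        simp only [zero_add, Nat.choose_one_right, Nat.choose_zero_right, add_zero, pow_one]
        push_cast at hn ⊢
        simp only [add_zero] at hn
        field_simp
        ring
      · rw [fcpMu_val lam _ (2 * (j : ℤ) + 3) (2 * (j + (s + 1)) + 1) s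
          (by push_cast; ring) (by omega) (by push_cast; ring)]
        have hp := fcp_pascal (2 * (j + (s + 1)) + 1) s
        rw [show 2 * (j + (s + 1 + 1)) = 2 * (j + (s + 1)) + 1 + 1 by ring,
          show s + 1 + 1 = s + 2 by ring, hp]
        push_cast at hn ⊢
        field_simp
        ring
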